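/- For all sufficiently large integers k there exist an approval election E = (N, C, (A_v)_{v in N}, k) with at most 4k²(k+1)·⌈log₂ k⌉ voters and at most 2k·(⌈log₂ k⌉ + 1) candidates, a committee W_0 ⊆ C with |W_0| = k, and a valid sequence of swaps (a_1,b_1),…,(a_s,b_s) starting from W_0 of length s ≥ k^{⌈log₂ k⌉} such that Δ(W_{t−1}, a_t, b_t) > 0 for every t ∈ {1,…,s}, i.e., every swap strictly increases the PAV score. In particular, the sequence has length Ω(k^{log k}). -/

import Mathlib

/-- PAV score of committee `W` given approval ballots `A`. -/
def pavsc {V C : Type*} [Fintype V] [DecidableEq C]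
    (A : V → Finset C) (W : Finset C) : ℚ :=
  ∑ v : V, ∑ j ∈ Finset.range ((A v ∩ W).card), (1 : ℚ) / (j + 1)

/-- `Δ(W,a,b) = pavsc((W ∖ {a}) ∪ {b}) − pavsc(W)`. -/
def pavDelta {V C : Type*} [Fintype V] [DecidableEq C]
    (A : V → Finset C) (W : Finset C) (a b : C) : ℚ :=
  pavsc A (insert b (W.erase a)) - pavsc A W

/-- One swap: `W ↦ (W ∪ {b}) ∖ {a}`. -/
def swapStep {C : Type*} [DecidableEq C] (W : Finset C) (p : C × C) : Finset C :=
  (insert p.2 W).erase p.1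

/-- The committee after the first `t` swaps. -/
def committeeAt {C : Type*} [DecidableEq C] (W0 : Finset C) (swaps : List (C × C)) (t : ℕ) :
    Finset C :=
  (swaps.take t).foldl swapStep W0

/-- A sequence of swaps is valid: each `a_t ∈ W_{t-1}` and `b_t ∉ W_{t-1}`. -/
def ValidSwapSeq {C : Type*} [DecidableEq C] (W0 : Finset C) (swaps : List (C × C)) : Prop :=
  ∀ (t : ℕ) (ht : t < swaps.length),
    (swaps.get ⟨t, ht⟩).1 ∈ committeeAt W0 swaps t ∧
    (swaps.get ⟨t, ht⟩).2 ∉ committeeAt W0 swaps t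

/-! ### Reflected Gray code and a potential increasing along it -/

/-- Reflected Gray code in base `q` with `n` digits. -/
def grayc (q : ℕ) : ℕ → ℕ → ℕ → ℕ
  | 0, _, _ => 0
  | n + 1, t, 0 => t / q ^ n
  | n + 1, t, i + 1 =>
      grayc q n (if Even (t / q ^ n) then t % q ^ n else q ^ n - 1 - t % q ^ n) i

/-- The potential. -/
def gpot (k : ℕ) (n : ℕ) (w : ℕ → ℚ) (g : ℕ → ℕ) : ℚ :=
  ∑ j ∈ Finset.range n, w j * (∏ i ∈ Finset.range j, (-1 : ℚ) ^ (g i)) * (2 * (g j : ℚ) - k)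

lemma gpot_succ (k n : ℕ) (w : ℕ → ℚ) (g : ℕ → ℕ) :
    gpot k (n + 1) w g = w 0 * (2 * (g 0 : ℚ) - k)
      + (-1) ^ (g 0) * gpot k n (fun j => w (j + 1)) (fun j => g (j + 1)) := by
  unfold gpot
  rw [Finset.sum_range_succ', Finset.mul_sum, add_comm]
  congr 1
  · simp
  · apply Finset.sum_congr rfl
    intro j _
    rw [Finset.prod_range_succ']
    ring

lemma grayc_lt (q : ℕ) (hq : 0 < q) (n t i : ℕ) (ht : t < q ^ n) : grayc q n t i < q := by
  induction n generalizing t i with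
  | zero => simpa [grayc] using hq
  | succ n ih =>
    have hp : 0 < q ^ n := pow_pos hq n
    cases i with
    | zero =>
      simp only [grayc]
      rw [Nat.div_lt_iff_lt_mul hp]
      rwa [pow_succ, mul_comm] at ht
    | succ i =>
      simp only [grayc]
      apply ih
      have hl := Nat.mod_lt t hp
      split_ifs
      · exact hl
      · clear ht
        generalize t % q ^ n = r at *
        generalize q ^ n = Q at *
        omega

lemma gsum_lt (k n : ℕ) (w : ℕ → ℚ) (hw : ∀ j, j < n + 1 → 0 < w j)
    (hr : ∀ j, j < n → (k + 1) * w (j + 1) ≤ w j) :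
    k * ∑ j ∈ Finset.range (n + 1), w j < (k + 1) * w 0 := by
  induction n generalizing w with
  | zero => have := hw 0 (by omega); simp; linarith
  | succ n ih =>
    rw [Finset.sum_range_succ', mul_add]
    have h1 := ih (fun j => w (j + 1)) (fun j hj => hw _ (by omega)) (fun j hj => hr _ (by omega))
    have h2 := hr 0 (by omega)
    simp only [zero_add] at h1 h2
    linarith

lemma gsum_lt' (k n : ℕ) (w : ℕ → ℚ) (hw : ∀ j, j < n + 1 → 0 < w j)
    (hr : ∀ j, j < n → (k + 1) * w (j + 1) ≤ w j) :
    k * ∑ j ∈ Finset.range n, w (j + 1) < w 0 := by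
  cases n with
  | zero => simpa using hw 0 (by omega)
  | succ n =>
    have h1 := gsum_lt k n (fun j => w (j + 1)) (fun j hj => hw _ (by omega))
      (fun j hj => hr _ (by omega))
    have h2 := hr 0 (by omega)
    simp only [zero_add] at h1 h2
    linarith

lemma gpot_first (k n : ℕ) (w : ℕ → ℚ) :
    gpot k n w (grayc (k + 1) n 0) = - (k * ∑ j ∈ Finset.range n, w j) := by
  induction n generalizing w with
  | zero => simp [gpot]
  | succ n ih =>
    rw [gpot_succ, Finset.sum_range_succ']
    have := ih (fun j => w (j + 1))
    simp [grayc, this]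
    ring

lemma gpot_last (k n : ℕ) (w : ℕ → ℚ) :
    gpot k n w (grayc (k + 1) n ((k + 1) ^ n - 1)) = k * ∑ j ∈ Finset.range n, w j := by
  induction n generalizing w with
  | zero => simp [gpot]
  | succ n ih =>
    have hp : 0 < (k + 1) ^ n := pow_pos (by omega) n
    have he : (k + 1) ^ (n + 1) - 1 = (k + 1) ^ n * k + ((k + 1) ^ n - 1) := by
      rw [pow_succ, mul_add]; omega
    have hd : ((k + 1) ^ (n + 1) - 1) / (k + 1) ^ n = k := by
      rw [he, Nat.mul_add_div hp, Nat.div_eq_of_lt (by omega), add_zero]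
    have hm : ((k + 1) ^ (n + 1) - 1) % (k + 1) ^ n = (k + 1) ^ n - 1 := by
      rw [he, Nat.mul_add_mod, Nat.mod_eq_of_lt (by omega)]
    have h1 := ih (fun j => w (j + 1))
    have h2 := gpot_first k n (fun j => w (j + 1))
    rw [gpot_succ, Finset.sum_range_succ']
    simp only [grayc, hd, hm]
    by_cases hk : Even k
    · simp only [hk, if_true, hk.neg_one_pow]
      rw [h1]; ring
    · rw [Nat.not_even_iff_odd] at hk
      have hk' : ¬ Even k := by rwa [Nat.not_even_iff_odd]
      simp only [hk', if_false, hk.neg_one_pow, Nat.sub_self]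
      rw [h2]; ring

lemma gray_step (k n : ℕ) (w : ℕ → ℚ) (hw : ∀ j, j < n → 0 < w j)
    (hr : ∀ j, j + 1 < n → (k + 1) * w (j + 1) ≤ w j) (t : ℕ) (ht : t + 1 < (k + 1) ^ n) :
    (∃ i < n, grayc (k + 1) n t i ≠ grayc (k + 1) n (t + 1) i ∧
      ∀ j, j ≠ i → grayc (k + 1) n t j = grayc (k + 1) n (t + 1) j) ∧
    gpot k n w (grayc (k + 1) n t) < gpot k n w (grayc (k + 1) n (t + 1)) := by
  induction n generalizing w t with
  | zero => simp at ht
  | succ n ih =>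
    have hp : 0 < (k + 1) ^ n := pow_pos (by omega) n
    have hlt := Nat.mod_lt t hp
    have hdm := Nat.div_add_mod t ((k + 1) ^ n)
    have ih' := ih (fun j => w (j + 1)) (fun j hj => hw _ (by omega))
      (fun j hj => hr _ (by omega))
    have hw0 := hw 0 (by omega)
    set x := t / (k + 1) ^ n with hx
    set r := t % (k + 1) ^ n with hrr
    by_cases hc : r + 1 < (k + 1) ^ n
    · have hd : (t + 1) / (k + 1) ^ n = x := by
        rw [← hdm, add_assoc, Nat.mul_add_div hp, Nat.div_eq_of_lt hc, add_zero]
      have hm : (t + 1) % (k + 1) ^ n = r + 1 := by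
        rw [← hdm, add_assoc, Nat.mul_add_mod, Nat.mod_eq_of_lt hc]
      by_cases hE : Even x
      · obtain ⟨⟨i, hi, hne, hj⟩, hF⟩ := ih' r hc
        refine ⟨⟨i + 1, by omega, ?_, ?_⟩, ?_⟩
        · simpa only [grayc, hd, hm, ← hx, ← hrr, hE, if_true] using hne
        · intro j hji
          cases j with
          | zero => simp only [grayc, hd, ← hx]
          | succ j =>
            simpa only [grayc, hd, hm, ← hx, ← hrr, hE, if_true] using hj j (by omega)
        · rw [gpot_succ, gpot_succ]
          simp only [grayc, hd, hm, ← hx, ← hrr, hE, if_true, hE.neg_one_pow]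
          linarith
      · have hO := Nat.not_even_iff_odd.mp hE
        obtain ⟨⟨i, hi, hne, hj⟩, hF⟩ := ih' ((k + 1) ^ n - 1 - (r + 1))
          (by clear_value x r; clear hx hrr hd hm hdm ht ih ih'; generalize (k + 1) ^ n = Q at *; omega)
        have hs : (k + 1) ^ n - 1 - (r + 1) + 1 = (k + 1) ^ n - 1 - r := by omega
        rw [hs] at hne hj hF
        refine ⟨⟨i + 1, by omega, ?_, ?_⟩, ?_⟩
        · simpa only [grayc, hd, hm, ← hx, ← hrr, hE, if_false] using hne.symm
        · intro j hji
          cases j with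
          | zero => simp only [grayc, hd, ← hx]
          | succ j =>
            simpa only [grayc, hd, hm, ← hx, ← hrr, hE, if_false] using (hj j (by omega)).symm
        · rw [gpot_succ, gpot_succ]
          simp only [grayc, hd, hm, ← hx, ← hrr, hE, if_false, hO.neg_one_pow]
          linarith
    · have hreq : r = (k + 1) ^ n - 1 := by omega
      have ht1 : t + 1 = (k + 1) ^ n * (x + 1) := by rw [mul_add]; omega
      have hd : (t + 1) / (k + 1) ^ n = x + 1 := by
        rw [ht1, Nat.mul_div_cancel_left _ hp]
      have hm : (t + 1) % (k + 1) ^ n = 0 := by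
        rw [ht1, Nat.mul_mod_right]
      have hM := gsum_lt' k n w hw (fun j hj => hr _ (by omega))
      have h1 := gpot_first k n (fun j => w (j + 1))
      have h2 := gpot_last k n (fun j => w (j + 1))
      by_cases hE : Even x
      · have hE1 : ¬ Even (x + 1) := by simpa [Nat.even_add_one] using hE
        have hO1 := Nat.not_even_iff_odd.mp hE1
        refine ⟨⟨0, by omega, ?_, ?_⟩, ?_⟩
        · simp only [grayc, hd, ← hx]; omega
        · intro j hj0
          cases j with
          | zero => omega
          | succ j =>
            simp only [grayc, hd, hm, ← hx, ← hrr, hE, hE1, if_true, if_false, hreq, Nat.sub_zero]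
        · rw [gpot_succ, gpot_succ]
          simp only [grayc, hd, hm, ← hx, ← hrr, hE, hE1, if_true, if_false, hreq, Nat.sub_zero,
            hE.neg_one_pow, hO1.neg_one_pow]
          rw [h2]; push_cast; linarith
      · have hE1 : Even (x + 1) := by simpa [Nat.even_add_one] using hE
        have hO := Nat.not_even_iff_odd.mp hE
        refine ⟨⟨0, by omega, ?_, ?_⟩, ?_⟩
        · simp only [grayc, hd, ← hx]; omega
        · intro j hj0
          cases j with
          | zero => omega
          | succ j =>
            simp only [grayc, hd, hm, ← hx, ← hrr, hE, hE1, if_true, if_false, hreq, Nat.sub_self]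
        · rw [gpot_succ, gpot_succ]
          simp only [grayc, hd, hm, ← hx, ← hrr, hE, hE1, if_true, if_false, hreq, Nat.sub_self,
            hE1.neg_one_pow, hO.neg_one_pow]
          rw [h1]; push_cast; linarith

/-! ### Finite differences of the harmonic numbers -/

/-- Harmonic numbers, in the form used by `pavsc`. -/
def hrm (n : ℕ) : ℚ := ∑ j ∈ Finset.range n, (1 : ℚ) / (j + 1)

/-- Iterated forward difference of `hrm`. -/
def ddh : ℕ → ℕ → ℚ
  | 0, b => hrm b
  | r + 1, b => ddh r (b + 1) - ddh r b

lemma ddh_succ (r b : ℕ) :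
    ddh (r + 1) b = (-1) ^ r * ((r.factorial * b.factorial : ℕ) : ℚ) / ((b + r + 1).factorial : ℚ) := by
  induction r generalizing b with
  | zero =>
    simp only [ddh, hrm, Finset.sum_range_succ, Nat.factorial_succ]
    have : (b.factorial : ℚ) ≠ 0 := by exact_mod_cast b.factorial_ne_zero
    push_cast
    field_simp
    simp
  | succ r ih =>
    rw [ddh, ih, ih]
    have e1 : (b + 1 + r + 1).factorial = (b + r + 2) * (b + r + 1).factorial := by
      rw [show b + 1 + r + 1 = (b + r + 1) + 1 by ring, Nat.factorial_succ]
    have e2 : (b + (r + 1) + 1).factorial = (b + r + 2) * (b + r + 1).factorial := by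
      rw [show b + (r + 1) + 1 = (b + r + 1) + 1 by ring, Nat.factorial_succ]
    rw [e1, e2, Nat.factorial_succ b, Nat.factorial_succ r]
    have : ((b + r + 1).factorial : ℚ) ≠ 0 := by exact_mod_cast (b + r + 1).factorial_ne_zero
    have h2 : (b : ℚ) + r + 2 ≠ 0 := by positivity
    push_cast
    field_simp
    ring

/-- number of agreements -/
def agr (r : ℕ) (x : ℕ → Bool) (σ : Finset ℕ) : ℕ :=
  ∑ i ∈ Finset.range r, if (i ∈ σ ↔ x i = false) then 1 else 0

lemma agr_succ_notMem (r : ℕ) (x : ℕ → Bool) (σ : Finset ℕ) (h : σ ⊆ Finset.range r) :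
    agr (r + 1) x σ = agr r x σ + if x r then 1 else 0 := by
  have : r ∉ σ := fun hh => by simpa using h hh
  unfold agr
  rw [Finset.sum_range_succ]
  cases x r <;> simp [this]

lemma agr_succ_insert (r : ℕ) (x : ℕ → Bool) (σ : Finset ℕ) :
    agr (r + 1) x (insert r σ) = agr r x σ + if x r then 0 else 1 := by
  unfold agr
  rw [Finset.sum_range_succ]
  congr 1
  · apply Finset.sum_congr rfl
    intro i hi
    have : i ≠ r := by simp at hi; omega
    simp [this]
  · cases x r <;> simp

lemma usum (r : ℕ) (x : ℕ → Bool) (b : ℕ) :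
    ∑ σ ∈ (Finset.range r).powerset, (-1 : ℚ) ^ σ.card * hrm (b + agr r x σ)
      = (∏ i ∈ Finset.range r, if x i then (1 : ℚ) else -1) * ddh r b := by
  induction r generalizing b with
  | zero => simp [agr, ddh]
  | succ r ih =>
    rw [Finset.range_add_one, Finset.sum_powerset_insert (by simp),
      Finset.prod_insert (by simp)]
    have e1 : ∀ σ ∈ (Finset.range r).powerset,
        (-1 : ℚ) ^ σ.card * hrm (b + agr (r + 1) x σ)
        = (-1 : ℚ) ^ σ.card * hrm ((b + if x r then 1 else 0) + agr r x σ) := by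
      intro σ hσ
      rw [agr_succ_notMem r x σ (Finset.mem_powerset.mp hσ)]
      congr 2; ring
    have e2 : ∀ σ ∈ (Finset.range r).powerset,
        (-1 : ℚ) ^ (insert r σ).card * hrm (b + agr (r + 1) x (insert r σ))
        = - ((-1 : ℚ) ^ σ.card * hrm ((b + if x r then 0 else 1) + agr r x σ)) := by
      intro σ hσ
      have : r ∉ σ := fun hh => by simpa using Finset.mem_powerset.mp hσ hh
      rw [agr_succ_insert r x σ, Finset.card_insert_of_notMem this, pow_succ]
      rw [show b + (agr r x σ + if x r then 0 else 1) = (b + if x r then 0 else 1) + agr r x σ by ring]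
      ring
    rw [Finset.sum_congr rfl e1, Finset.sum_congr rfl e2, Finset.sum_neg_distrib, ih, ih]
    cases x r <;> simp [ddh] <;> ring

/-- The unsigned total. -/
def stot : ℕ → ℕ → ℚ
  | 0, b => hrm b
  | r + 1, b => stot r (b + 1) + stot r b

lemma ssum (r : ℕ) (x : ℕ → Bool) (b : ℕ) :
    ∑ σ ∈ (Finset.range r).powerset, hrm (b + agr r x σ) = stot r b := by
  induction r generalizing b with
  | zero => simp [agr, stot]
  | succ r ih =>
    rw [Finset.range_add_one, Finset.sum_powerset_insert (by simp)]
    have e1 : ∀ σ ∈ (Finset.range r).powerset,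
        hrm (b + agr (r + 1) x σ) = hrm ((b + if x r then 1 else 0) + agr r x σ) := by
      intro σ hσ
      rw [agr_succ_notMem r x σ (Finset.mem_powerset.mp hσ)]
      congr 1; ring
    have e2 : ∀ σ ∈ (Finset.range r).powerset,
        hrm (b + agr (r + 1) x (insert r σ))
        = hrm ((b + if x r then 0 else 1) + agr r x σ) := by
      intro σ hσ
      rw [agr_succ_insert r x σ]
      congr 1; ring
    rw [Finset.sum_congr rfl e1, Finset.sum_congr rfl e2, ih, ih]
    cases x r <;> simp [stot] <;> ring

lemma oddsum (r : ℕ) (x : ℕ → Bool) (b : ℕ) :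
    ∑ σ ∈ (Finset.range r).powerset, (if Odd σ.card then hrm (b + agr r x σ) else 0)
      = (stot r b - (∏ i ∈ Finset.range r, if x i then (1 : ℚ) else -1) * ddh r b) / 2 := by
  rw [← usum, ← ssum r x b, ← Finset.sum_sub_distrib, Finset.sum_div]
  apply Finset.sum_congr rfl
  intro σ _
  split_ifs with h
  · rw [h.neg_one_pow]; ring
  · rw [(Nat.not_odd_iff_even.mp h).neg_one_pow]; ring

/-- The weights. -/
def wgt (b j : ℕ) : ℚ := - ddh (2 * j + 2) b / 2

lemma wgt_eq (b j : ℕ) : wgt b j =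
    (((2 * j + 1).factorial * b.factorial : ℕ) : ℚ) / ((b + 2 * j + 2).factorial : ℚ) / 2 := by
  rw [wgt, ddh_succ, (show Odd (2 * j + 1) from ⟨j, rfl⟩).neg_one_pow]
  rw [show b + (2 * j + 1) + 1 = b + 2 * j + 2 by ring]
  ring

lemma wgt_pos (b j : ℕ) : 0 < wgt b j := by
  rw [wgt_eq]
  have := (2 * j + 1).factorial_pos
  have := b.factorial_pos
  have := (b + 2 * j + 2).factorial_pos
  positivity

lemma wgt_ratio (k b j : ℕ)
    (h : (k + 1) * ((2 * j + 2) * (2 * j + 3)) ≤ (b + 2 * j + 3) * (b + 2 * j + 4)) :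
    ((k : ℚ) + 1) * wgt b (j + 1) ≤ wgt b j := by
  rw [wgt_eq, wgt_eq]
  have e1 : (2 * (j + 1) + 1).factorial = (2 * j + 3) * ((2 * j + 2) * (2 * j + 1).factorial) := by
    rw [show 2 * (j + 1) + 1 = (2 * j + 1) + 1 + 1 by ring, Nat.factorial_succ, Nat.factorial_succ]
  have e2 : (b + 2 * (j + 1) + 2).factorial
      = (b + 2 * j + 4) * ((b + 2 * j + 3) * (b + 2 * j + 2).factorial) := by
    rw [show b + 2 * (j + 1) + 2 = (b + 2 * j + 2) + 1 + 1 by ring, Nat.factorial_succ,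
      Nat.factorial_succ]
  rw [e1, e2]
  have h' : ((k : ℚ) + 1) * ((2 * j + 2) * (2 * j + 3)) ≤ (b + 2 * j + 3) * (b + 2 * j + 4) := by
    exact_mod_cast h
  have p1 : (0 : ℚ) < (2 * j + 1).factorial := by exact_mod_cast (2 * j + 1).factorial_pos
  have p2 : (0 : ℚ) < b.factorial := by exact_mod_cast b.factorial_pos
  have p3 : (0 : ℚ) < (b + 2 * j + 2).factorial := by exact_mod_cast (b + 2 * j + 2).factorial_pos
  push_cast
  rw [← mul_div_assoc, ← mul_div_assoc]
  apply div_le_div_of_nonneg_right _ (by norm_num)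
  rw [div_le_div_iff₀ (by positivity) (by positivity)]
  have := mul_le_mul_of_nonneg_right h'
    (show (0 : ℚ) ≤ (2 * j + 1).factorial * b.factorial * (b + 2 * j + 2).factorial by positivity)
  linarith

/-! ### Transport to `Fin n`, `Fin m` -/

lemma committeeAt_ofFn {C : Type*} [DecidableEq C] (s : ℕ) (W : ℕ → Finset C) (p : Fin s → C × C)
    (h : ∀ t : Fin s, W (t + 1) = swapStep (W t) (p t)) (t : ℕ) (ht : t ≤ s) :
    committeeAt (W 0) (List.ofFn p) t = W t := by
  induction t with
  | zero => simp [committeeAt]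
  | succ t ih =>
    have ih' := ih (by omega)
    unfold committeeAt at ih' ⊢
    have hl : t < (List.ofFn p).length := by simp; omega
    rw [← List.take_append_getElem hl, List.foldl_append, ih']
    simp only [List.foldl_cons, List.foldl_nil, List.getElem_ofFn]
    exact (h ⟨t, by omega⟩).symm

lemma transport_fin {V C : Type*} [Fintype V] [Fintype C] [DecidableEq C]
    (A : V → Finset C) (s : ℕ) (W : ℕ → Finset C)
    (hstep : ∀ t, t < s → ∃ a b, a ∈ W t ∧ b ∉ W t ∧ W (t + 1) = (insert b (W t)).erase a ∧
      pavsc A (W t) < pavsc A (W (t + 1))) :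
    ∃ (A' : Fin (Fintype.card V) → Finset (Fin (Fintype.card C)))
      (W0 : Finset (Fin (Fintype.card C)))
      (swaps : List (Fin (Fintype.card C) × Fin (Fintype.card C))),
      W0.card = (W 0).card ∧ swaps.length = s ∧ ValidSwapSeq W0 swaps ∧
      ∀ (t : ℕ) (ht : t < swaps.length),
        0 < pavDelta A' (committeeAt W0 swaps t)
              (swaps.get ⟨t, ht⟩).1 (swaps.get ⟨t, ht⟩).2 := by
  choose a b ha hb hW hlt using hstep
  let eC := Fintype.equivFin C
  let eV := Fintype.equivFin V
  let W' : ℕ → Finset (Fin (Fintype.card C)) := fun t => (W t).map eC.toEmbedding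
  let A' : Fin (Fintype.card V) → Finset (Fin (Fintype.card C)) :=
    fun v => (A (eV.symm v)).map eC.toEmbedding
  let p : Fin s → Fin (Fintype.card C) × Fin (Fintype.card C) :=
    fun t => (eC (a t t.2), eC (b t t.2))
  have hsc : ∀ U : Finset C, pavsc A' (U.map eC.toEmbedding) = pavsc A U := by
    intro U
    unfold pavsc
    rw [← eV.symm.sum_comp]
    apply Finset.sum_congr rfl
    intro v _
    simp only [A']
    rw [← Finset.map_inter, Finset.card_map]
  have hst : ∀ t : Fin s, W' (t + 1) = swapStep (W' t) (p t) := by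
    intro t
    simp only [W', p, swapStep]
    rw [hW t t.2, Finset.map_erase, Finset.map_insert]
    rfl
  have hcom : ∀ t ≤ s, committeeAt (W' 0) (List.ofFn p) t = W' t :=
    committeeAt_ofFn s W' p hst
  refine ⟨A', W' 0, List.ofFn p, by simp [W'], by simp, ?_, ?_⟩
  · intro t ht
    have hts : t < s := by simpa using ht
    rw [hcom t hts.le]
    simp only [List.get_eq_getElem, List.getElem_ofFn, p, W']
    constructor
    · simpa using ha t hts
    · simpa using hb t hts
  · intro t ht
    have hts : t < s := by simpa using ht
    rw [hcom t hts.le]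
    have hab : a t hts ≠ b t hts := fun h => hb t hts (h ▸ ha t hts)
    have e : insert (p ⟨t, hts⟩).2 ((W' t).erase (p ⟨t, hts⟩).1) = W' (t + 1) := by
      rw [hst ⟨t, hts⟩, swapStep, Finset.erase_insert_of_ne]
      simpa [p] using hab.symm
    simp only [List.get_eq_getElem, List.getElem_ofFn]
    rw [pavDelta, e, sub_pos, hsc, hsc]
    exact hlt t hts

/-! ### The election -/

/-- The coordinates seen by a voter of level `j` with threshold `t`. -/
def xco (j t : ℕ) (g : ℕ → ℕ) (i : ℕ) : Bool :=
  if i < j then decide (Even (g i)) else if i = j then decide (t < g j) else true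

/-- Approval predicate. -/
def aprv (L k j t : ℕ) (σ : Finset ℕ) : (Fin L × Fin (k + 1)) ⊕ Fin (k - L) → Prop
  | Sum.inl (i, d) => i.val ≤ j ∧ (i.val ∈ σ ↔ xco j t (fun _ => d.val) i.val = false)
  | Sum.inr f => L ≤ f.val ∨ (f.val < j + 1 ∧ (j + 1 + f.val) ∉ σ)

open Classical in
/-- Ballots. -/
noncomputable def ballot (L k : ℕ) (v : Fin L × Fin k × (Finset.range (2 * L)).powerset) :
    Finset ((Fin L × Fin (k + 1)) ⊕ Fin (k - L)) :=
  if v.2.2.1 ⊆ Finset.range (2 * v.1.val + 2) ∧ Odd v.2.2.1.card then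
    Finset.univ.filter (aprv L k v.1.val v.2.1.val v.2.2.1) else ∅

/-- Membership predicate of the committee encoding the digits `g`. -/
def inW (L k : ℕ) (g : ℕ → ℕ) : (Fin L × Fin (k + 1)) ⊕ Fin (k - L) → Prop
  | Sum.inl (i, d) => d.val = g i
  | Sum.inr _ => True

open Classical in
/-- The committee encoding the digits `g`. -/
noncomputable def commG (L k : ℕ) (g : ℕ → ℕ) : Finset ((Fin L × Fin (k + 1)) ⊕ Fin (k - L)) :=
  Finset.univ.filter (inW L k g)

open Classical in
lemma card_comm_filter (L k : ℕ) (g : ℕ → ℕ) (hg : ∀ i < L, g i < k + 1)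
    (P : (Fin L × Fin (k + 1)) ⊕ Fin (k - L) → Prop) :
    (Finset.univ.filter P ∩ commG L k g).card
      = (∑ i : Fin L, if P (Sum.inl (i, ⟨g i, hg i i.2⟩)) then 1 else 0)
        + ∑ f : Fin (k - L), if P (Sum.inr f) then 1 else 0 := by
  rw [commG, ← Finset.filter_and, Finset.card_filter, Fintype.sum_sum_type, Fintype.sum_prod_type]
  congr 1
  · apply Finset.sum_congr rfl
    intro i _
    rw [Finset.sum_eq_single (⟨g i, hg i i.2⟩ : Fin (k + 1))]
    · simp [inW]
    · intro d _ hd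
      have : ¬ (d.val = g i) := fun h => hd (Fin.ext h)
      simp [inW, this]
    · simp
  · apply Finset.sum_congr rfl
    intro f _
    simp [inW]

lemma card_comm (L k : ℕ) (hL : L ≤ k) (g : ℕ → ℕ) (hg : ∀ i < L, g i < k + 1) :
    (commG L k g).card = k := by
  have := card_comm_filter L k g hg (fun _ => True)
  simp at this
  omega

lemma card_ballot (L k : ℕ) (hL : 2 * L ≤ k) (g : ℕ → ℕ) (hg : ∀ i < L, g i < k + 1)
    (v : Fin L × Fin k × (Finset.range (2 * L)).powerset)
    (hv : v.2.2.1 ⊆ Finset.range (2 * v.1.val + 2) ∧ Odd v.2.2.1.card) :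
    (ballot L k v ∩ commG L k g).card
      = (k - 2 * L) + agr (2 * v.1.val + 2) (xco v.1.val v.2.1.val g) v.2.2.1 := by
  classical
  obtain ⟨j, t, σ⟩ := v
  simp only at hv ⊢
  rw [ballot]
  simp only
  rw [if_pos hv]
  have hjL := j.2
  have hcf := card_comm_filter L k g hg (aprv L k j.val t.val σ.1)
  rw [show (Finset.univ.filter (aprv L k j.val t.val σ.1) ∩ commG L k g).card = _ by convert hcf]
  have e1 : (∑ i : Fin L, if aprv L k j.val t.val σ.1 (Sum.inl (i, ⟨g i, hg i i.2⟩)) then 1 else 0)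
      = ∑ i ∈ Finset.range (j.val + 1),
          if (i ∈ σ.1 ↔ xco j.val t.val g i = false) then 1 else 0 := by
    have h1 : ∀ i : Fin L,
        (if aprv L k j.val t.val σ.1 (Sum.inl (i, ⟨g i, hg i i.2⟩)) then 1 else 0)
        = (fun i : ℕ => if i ≤ j.val ∧ (i ∈ σ.1 ↔ xco j.val t.val g i = false) then 1 else 0)
          i.val := by
      intro i
      have hx : i.val ≤ j.val →
          xco j.val t.val (fun _ => g i.val) i.val = xco j.val t.val g i.val := by
        intro h
        unfold xco
        split_ifs with h1 h2
        · rfl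
        · rw [h2]
        · rfl
      refine if_congr ?_ rfl rfl
      change (i.val ≤ j.val ∧ (i.val ∈ σ.1 ↔ xco j.val t.val (fun _ => g i.val) i.val = false)) ↔ _
      by_cases hi : i.val ≤ j.val
      · rw [hx hi]
      · simp [hi]
    rw [Finset.sum_congr rfl (fun i _ => h1 i), Fin.sum_univ_eq_sum_range
      (fun i : ℕ => if i ≤ j.val ∧ (i ∈ σ.1 ↔ xco j.val t.val g i = false) then 1 else 0)]
    rw [← Finset.sum_subset (s₁ := Finset.range (j.val + 1))]
    · apply Finset.sum_congr rfl
      intro i hi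
      have : i ≤ j.val := by simp at hi; omega
      simp [this]
    · intro i hi; simp at hi ⊢; omega
    · intro i _ hi
      have : ¬ i ≤ j.val := by simp at hi; omega
      simp [this]
  have e2 : (∑ f : Fin (k - L), if aprv L k j.val t.val σ.1 (Sum.inr f) then 1 else 0)
      = (k - 2 * L) + ∑ i ∈ Finset.range (j.val + 1),
          if (j.val + 1 + i ∈ σ.1 ↔ xco j.val t.val g (j.val + 1 + i) = false) then 1 else 0 := by
    have h1 : ∀ f : Fin (k - L), (if aprv L k j.val t.val σ.1 (Sum.inr f) then 1 else 0)
        = (fun f : ℕ => if L ≤ f ∨ (f < j.val + 1 ∧ (j.val + 1 + f) ∉ σ.1) then 1 else 0)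
          f.val := by
      intro f
      exact if_congr Iff.rfl rfl rfl
    rw [Finset.sum_congr rfl (fun i _ => h1 i), Fin.sum_univ_eq_sum_range
      (fun f : ℕ => if L ≤ f ∨ (f < j.val + 1 ∧ (j.val + 1 + f) ∉ σ.1) then 1 else 0)]
    rw [show k - L = (j.val + 1) + ((L - (j.val + 1)) + (k - 2 * L)) by omega,
      Finset.sum_range_add _ (j.val + 1), Finset.sum_range_add _ (L - (j.val + 1)), add_comm]
    have p1 : ∑ x ∈ Finset.range (L - (j.val + 1)),
        (if L ≤ j.val + 1 + x ∨ (j.val + 1 + x < j.val + 1 ∧ (j.val + 1 + (j.val + 1 + x)) ∉ σ.1)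
          then 1 else 0) = 0 := by
      apply Finset.sum_eq_zero
      intro x hx
      rw [if_neg]
      simp at hx
      omega
    have p2 : ∑ x ∈ Finset.range (k - 2 * L),
        (if L ≤ j.val + 1 + (L - (j.val + 1) + x) ∨
          (j.val + 1 + (L - (j.val + 1) + x) < j.val + 1 ∧
            (j.val + 1 + (j.val + 1 + (L - (j.val + 1) + x))) ∉ σ.1)
          then 1 else 0) = k - 2 * L := by
      rw [Finset.sum_congr rfl (g := fun _ => 1)]
      · simp
      · intro x hx
        rw [if_pos]
        left; omega
    rw [p1, p2, zero_add]
    congr 1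
    apply Finset.sum_congr rfl
    intro x hx
    simp only [Finset.mem_range] at hx
    have a1 : ¬ (L ≤ x) := by omega
    have a2 : ¬ (j.val + 1 + x < j.val) := by omega
    have a3 : ¬ (j.val + 1 + x = j.val) := by omega
    simp [xco, hx, a1, a2, a3]
  rw [e1, e2, agr, show 2 * j.val + 2 = (j.val + 1) + (j.val + 1) by ring,
    Finset.sum_range_add _ (j.val + 1) (j.val + 1)]
  exact add_left_comm _ _ _

lemma prod_xco (j t : ℕ) (g : ℕ → ℕ) :
    (∏ i ∈ Finset.range (2 * j + 2), if xco j t g i then (1 : ℚ) else -1)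
      = (∏ i ∈ Finset.range j, (-1 : ℚ) ^ (g i)) * (if t < g j then 1 else -1) := by
  rw [show 2 * j + 2 = j + 1 + (j + 1) by ring, Finset.prod_range_add, Finset.prod_range_succ]
  have h1 : ∏ x ∈ Finset.range (j + 1), (if xco j t g (j + 1 + x) then (1 : ℚ) else -1) = 1 := by
    apply Finset.prod_eq_one
    intro x _
    have a2 : ¬ (j + 1 + x < j) := by omega
    have a3 : ¬ (j + 1 + x = j) := by omega
    simp [xco, a2, a3]
  rw [h1, mul_one]
  congr 1
  · apply Finset.prod_congr rfl
    intro i hi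
    simp only [Finset.mem_range] at hi
    by_cases hE : Even (g i)
    · simp [xco, hi, hE]
    · simp [xco, hi, hE, (Nat.not_even_iff_odd.mp hE).neg_one_pow]
  · simp [xco]

lemma thr_sum (k d : ℕ) (hd : d ≤ k) :
    ∑ t ∈ Finset.range k, (if t < d then (1 : ℚ) else -1) = 2 * d - k := by
  obtain ⟨e, rfl⟩ := Nat.exists_eq_add_of_le hd
  rw [Finset.sum_range_add, Finset.sum_congr rfl (g := fun _ => (1 : ℚ)),
    Finset.sum_congr (s₁ := Finset.range e) rfl (g := fun _ => (-1 : ℚ))]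
  · simp; ring
  · intro x _; simp
  · intro x hx; simp at hx; simp [hx]

lemma score_eq (L k : ℕ) (hL : 2 * L ≤ k) (g : ℕ → ℕ) (hg : ∀ i < L, g i < k + 1) :
    pavsc (ballot L k) (commG L k g)
      = (∑ j ∈ Finset.range L, (k : ℚ) * (stot (2 * j + 2) (k - 2 * L) / 2))
        + gpot k L (wgt (k - 2 * L)) g := by
  have hin : ∀ (j : Fin L) (t : Fin k),
      ∑ σ : (Finset.range (2 * L)).powerset,
        hrm (ballot L k (j, t, σ) ∩ commG L k g).card
      = stot (2 * j.val + 2) (k - 2 * L) / 2 + wgt (k - 2 * L) j.val *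
        ((∏ i ∈ Finset.range j.val, (-1 : ℚ) ^ (g i)) * (if t.val < g j.val then 1 else -1)) := by
    intro j t
    have h1 : ∀ σ : (Finset.range (2 * L)).powerset,
        hrm (ballot L k (j, t, σ) ∩ commG L k g).card
        = (fun σ : Finset ℕ => if σ ⊆ Finset.range (2 * j.val + 2) ∧ Odd σ.card then
            hrm ((k - 2 * L) + agr (2 * j.val + 2) (xco j.val t.val g) σ) else 0) σ.1 := by
      intro σ
      by_cases hv : σ.1 ⊆ Finset.range (2 * j.val + 2) ∧ Odd σ.1.card
      · rw [card_ballot L k hL g hg (j, t, σ) hv]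
        simp only [hv, and_self, if_true]
      · simp only [ballot, hv, if_false]
        simp [hrm]
    rw [Finset.sum_congr rfl (fun σ _ => h1 σ), Finset.sum_coe_sort (Finset.range (2 * L)).powerset
      (fun σ : Finset ℕ => if σ ⊆ Finset.range (2 * j.val + 2) ∧ Odd σ.card then
            hrm ((k - 2 * L) + agr (2 * j.val + 2) (xco j.val t.val g) σ) else 0)]
    have hj := j.2
    rw [← Finset.sum_subset (s₁ := (Finset.range (2 * j.val + 2)).powerset)]
    · rw [Finset.sum_congr rfl (g := fun σ : Finset ℕ => if Odd σ.card then
            hrm ((k - 2 * L) + agr (2 * j.val + 2) (xco j.val t.val g) σ) else 0)]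
      · rw [oddsum, prod_xco, wgt]
        ring
      · intro σ hσ
        simp only [Finset.mem_powerset] at hσ
        simp only [hσ, true_and]
    · apply Finset.powerset_mono.mpr
      intro i hi; simp at hi ⊢; omega
    · intro σ _ hσ
      simp only [Finset.mem_powerset] at hσ
      simp only [hσ, false_and, if_false]
  have hj : ∀ j : Fin L, (∑ t : Fin k, ∑ σ : (Finset.range (2 * L)).powerset,
        hrm (ballot L k (j, t, σ) ∩ commG L k g).card)
      = (fun j : ℕ => (k : ℚ) * (stot (2 * j + 2) (k - 2 * L) / 2) + wgt (k - 2 * L) j *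
        (∏ i ∈ Finset.range j, (-1 : ℚ) ^ (g i)) * (2 * (g j : ℚ) - k)) j.val := by
    intro j
    rw [Finset.sum_congr rfl (fun t _ => hin j t), Finset.sum_add_distrib, ← Finset.mul_sum,
      ← Finset.mul_sum, Fin.sum_univ_eq_sum_range (fun t => if t < g j.val then (1 : ℚ) else -1),
      thr_sum k (g j.val) (by have := hg j.val j.2; omega)]
    simp
    ring
  have hs : pavsc (ballot L k) (commG L k g) = ∑ j : Fin L, ∑ t : Fin k,
      ∑ σ : (Finset.range (2 * L)).powerset, hrm (ballot L k (j, t, σ) ∩ commG L k g).card := by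
    unfold pavsc
    rw [Fintype.sum_prod_type]
    apply Finset.sum_congr rfl
    intro j _
    rw [Fintype.sum_prod_type]
    rfl
  rw [hs, Finset.sum_congr rfl (fun j _ => hj j), Fin.sum_univ_eq_sum_range
    (fun j : ℕ => (k : ℚ) * (stot (2 * j + 2) (k - 2 * L) / 2) + wgt (k - 2 * L) j *
        (∏ i ∈ Finset.range j, (-1 : ℚ) ^ (g i)) * (2 * (g j : ℚ) - k)), gpot,
    Finset.sum_add_distrib]

lemma comm_swap (L k : ℕ) (g g' : ℕ → ℕ) (hg : ∀ i < L, g i < k + 1) (hg' : ∀ i < L, g' i < k + 1)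
    (h : ∃ i < L, g i ≠ g' i ∧ ∀ j, j ≠ i → g j = g' j) :
    ∃ a b, a ∈ commG L k g ∧ b ∉ commG L k g ∧ commG L k g' = (insert b (commG L k g)).erase a := by
  obtain ⟨i, hi, hne, hj⟩ := h
  refine ⟨Sum.inl (⟨i, hi⟩, ⟨g i, hg i hi⟩), Sum.inl (⟨i, hi⟩, ⟨g' i, hg' i hi⟩), ?_, ?_, ?_⟩
  · simp [commG, inW]
  · simp [commG, inW]; exact fun h => hne h.symm
  · ext c
    rcases c with ⟨i', d⟩ | f
    · simp only [commG, Finset.mem_filter, Finset.mem_univ, true_and, inW, Finset.mem_erase,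
        Finset.mem_insert, ne_eq, Sum.inl.injEq, Prod.mk.injEq, Fin.ext_iff]
      by_cases hii : i'.val = i
      · rw [hii]; simp only [true_and]
        omega
      · rw [hj i'.val hii]; simp [hii]
    · simp [commG, inW]

lemma pow_bound (L : ℕ) (h : 14 ≤ L) : 32 * L ^ 2 ≤ 2 ^ (L - 1) := by
  induction L, h using Nat.le_induction with
  | base => norm_num
  | succ n hn ih =>
    have : 2 ^ (n + 1 - 1) = 2 * 2 ^ (n - 1) := by
      rw [← pow_succ']; congr 1; omega
    rw [this]
    nlinarith

/-- For all sufficiently large `k` there exist an approval election with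
at most `4k²(k+1)·⌈log₂ k⌉` voters and at most `2k·(⌈log₂ k⌉+1)` candidates, a committee
`W₀` of size `k`, and a valid sequence of swaps starting from `W₀` of length at least
`k^⌈log₂ k⌉` each of which strictly increases the PAV score. -/
theorem main_lower_bound_adversarial :
    ∃ K : ℕ, ∀ k : ℕ, K ≤ k →
    ∃ (n m : ℕ) (A : Fin n → Finset (Fin m)) (W0 : Finset (Fin m))
      (swaps : List (Fin m × Fin m)),
      1 ≤ k ∧ k ≤ m ∧
      n ≤ 4 * k ^ 2 * (k + 1) * Nat.clog 2 k ∧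
      m ≤ 2 * k * (Nat.clog 2 k + 1) ∧
      W0.card = k ∧
      k ^ Nat.clog 2 k ≤ swaps.length ∧
      ValidSwapSeq W0 swaps ∧
      ∀ (t : ℕ) (ht : t < swaps.length),
        0 < pavDelta A (committeeAt W0 swaps t)
              (swaps.get ⟨t, ht⟩).1 (swaps.get ⟨t, ht⟩).2 := by
  refine ⟨2 ^ 14, fun k hk => ?_⟩
  have hk1 : 16384 ≤ k := by simpa using hk
  have hL14 : 14 ≤ Nat.clog 2 k := by
    have := Nat.clog_mono_right 2 hk
    rwa [Nat.clog_pow 2 14 (by norm_num)] at this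
  have hlt : 2 ^ (Nat.clog 2 k - 1) < k := Nat.pow_pred_clog_lt_self (by norm_num) (by omega)
  generalize Nat.clog 2 k = L at hL14 hlt ⊢
  have h32 : 32 * L ^ 2 ≤ k := (pow_bound L hL14).trans hlt.le
  have hLk : 2 * L ≤ k := by nlinarith
  have h2L : 2 ^ L ≤ 2 * k := by
    have : 2 ^ L = 2 * 2 ^ (L - 1) := by rw [← pow_succ']; congr 1; omega
    omega
  have hdig : ∀ t, t < (k + 1) ^ L → ∀ i < L, grayc (k + 1) L t i < k + 1 :=
    fun t ht i _ => grayc_lt (k + 1) (by omega) L t i ht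
  have hratio : ∀ j, j + 1 < L →
      ((k : ℚ) + 1) * wgt (k - 2 * L) (j + 1) ≤ wgt (k - 2 * L) j := by
    intro j hj
    apply wgt_ratio
    obtain ⟨b, rfl⟩ := Nat.exists_eq_add_of_le hLk
    rw [Nat.add_sub_cancel_left]
    have c1 : (2 * j + 2) * (2 * j + 3) ≤ (2 * L) * (2 * L) :=
      Nat.mul_le_mul (by omega) (by omega)
    have c2 : b * b ≤ (b + 2 * j + 3) * (b + 2 * j + 4) :=
      Nat.mul_le_mul (by omega) (by omega)
    have c3 : (2 * L + b + 1) * ((2 * L) * (2 * L)) ≤ b * b := by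
      have d1 : 2 * L ≤ b := by nlinarith
      have d2 : 16 * L ^ 2 ≤ b := by nlinarith
      nlinarith
    exact (Nat.mul_le_mul_left _ c1).trans (c3.trans c2)
  obtain ⟨A', W0, swaps, h1, h2, h3, h4⟩ := transport_fin (ballot L k) ((k + 1) ^ L - 1)
    (fun t => commG L k (grayc (k + 1) L t)) (by
      intro t ht
      have ht' : t + 1 < (k + 1) ^ L := by omega
      obtain ⟨hs, hF⟩ := gray_step k L (wgt (k - 2 * L)) (fun j _ => wgt_pos _ j) hratio t ht'
      obtain ⟨a, b, ha, hb, hab⟩ := comm_swap L k _ _ (hdig t (by omega)) (hdig (t + 1) ht') hs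
      refine ⟨a, b, ha, hb, hab, ?_⟩
      rw [score_eq L k hLk _ (hdig t (by omega)), score_eq L k hLk _ (hdig (t + 1) ht')]
      linarith)
  have hpk : k ^ L < (k + 1) ^ L := Nat.pow_lt_pow_left (by omega) (by omega)
  have hcV : Fintype.card (Fin L × Fin k × (Finset.range (2 * L)).powerset)
      = L * (k * 2 ^ (2 * L)) := by simp
  have hcC : Fintype.card ((Fin L × Fin (k + 1)) ⊕ Fin (k - L)) = L * (k + 1) + (k - L) := by simp
  have hLL : k - L + L = k := Nat.sub_add_cancel (by omega)
  refine ⟨_, _, A', W0, swaps, by omega, ?_, ?_, ?_, ?_, by omega, h3, h4⟩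
  · rw [hcC]; nlinarith
  · rw [hcV, mul_comm 2 L, pow_mul]
    have : (2 ^ L) ^ 2 ≤ (2 * k) ^ 2 := Nat.pow_le_pow_left h2L 2
    calc L * (k * (2 ^ L) ^ 2) ≤ L * (k * (2 * k) ^ 2) := by gcongr
      _ ≤ L * ((k + 1) * (2 * k) ^ 2) := by gcongr; omega
      _ = _ := by ring
  · rw [hcC]; nlinarith
  · rw [h1]
    exact card_comm L k (by omega) _ (hdig 0 (by positivity))
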